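/- Let A = {(x, y, z) ∈ ℝ³ : z ≥ x² + y⁴} and B = {(x, y, 0) : (x, y) ∈ ℝ²}. Let {(x_k, y_k)} ⊆ ℝ² be defined by (x_{k+1}, y_{k+1}, 0) = P_B(P_A((x_k, y_k, 0))) for k = 0, 1, 2, …. If y_0 ≠ 0, then ‖(x_k, y_k)‖ = Θ(k^{−1/6}) as k → ∞, i.e., there exist constants 0 < C_1 ≤ C_2 and K such that C_1 k^{−1/6} ≤ ‖(x_k, y_k)‖ ≤ C_2 k^{−1/6} for all k ≥ K. -/

import Mathlib

open Filter

/-- `u` is the metric projection of `p` onto `S`. -/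
def IsMetricProj {E : Type*} [NormedAddCommGroup E] (S : Set E) (p u : E) : Prop :=
  u ∈ S ∧ ∀ s ∈ S, ‖u - p‖ ≤ ‖s - p‖

/-- The point (a, b, c) of Euclidean 3-space. -/
noncomputable def e3 (a b c : ℝ) : EuclideanSpace ℝ (Fin 3) :=
  (WithLp.equiv 2 (Fin 3 → ℝ)).symm ![a, b, c]

/-!
Projecting onto `A` and then onto `B` is a proximal step for `f² / 2`, where `f = x² + y⁴`.
Fermat's rule turns the iteration into the implicit recurrences
`xₖ = xₖ₊₁ (1 + 2 f)` and `yₖ = yₖ₊₁ (1 + 4 yₖ₊₁² f)`, with `f` evaluated at step `k + 1`.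
Since `f ≥ y⁴`, each step increases `|y|⁻⁶` by at least a positive constant, so `y = O(k^(-1/6))`.
As soon as `y` is small, `|x|` shrinks faster than `y²`, so `x = O(y²)` and `f = O(y⁴)`;
then each step also increases `|y|⁻⁶` by at most a constant.
Hence `|y| = Θ(k^(-1/6))`, and it dominates `x`.
-/

open Asymptotics Topology

section Asymptotics

lemma exists_bounds_of_isTheta {α E F : Type*} [Nonempty α] [SemilatticeSup α]
    [SeminormedAddCommGroup E] [SeminormedAddCommGroup F] {f : α → E} {g : α → F}
    (h : f =Θ[atTop] g) :
    ∃ C₁ C₂ : ℝ, ∃ K : α, 0 < C₁ ∧ C₁ ≤ C₂ ∧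
      ∀ k ≥ K, C₁ * ‖g k‖ ≤ ‖f k‖ ∧ ‖f k‖ ≤ C₂ * ‖g k‖ := by
  obtain ⟨C, -, hC⟩ := h.1.exists_pos
  obtain ⟨c, hc, hc'⟩ := h.2.exists_pos
  obtain ⟨K, hK⟩ := eventually_atTop.1 (hC.bound.and hc'.bound)
  refine ⟨c⁻¹, max c⁻¹ C, K, inv_pos.2 hc, le_max_left _ _, fun k hk => ⟨?_, ?_⟩⟩
  · exact (inv_mul_le_iff₀ hc).2 (hK k hk).2
  · exact (hK k hk).1.trans (by gcongr; exact le_max_right _ _)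

lemma isTheta_sqrt_sq_add_sq {α : Type*} {l : Filter α} {f g : α → ℝ} (h : f =O[l] g) :
    (fun a => √(f a ^ 2 + g a ^ 2)) =Θ[l] g := by
  constructor
  · have hsq : (fun a => f a ^ 2 + g a ^ 2) =O[l] fun a => g a ^ 2 :=
      (h.pow 2).add (isBigO_refl _ l)
    have hsqrt := hsq.sqrt (Eventually.of_forall fun a => sq_nonneg (g a))
    simp only [Real.sqrt_sq_eq_abs] at hsqrt
    exact hsqrt.of_abs_right
  · refine isBigO_of_le l fun a => ?_
    rw [Real.norm_of_nonneg (Real.sqrt_nonneg _)]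
    exact Real.abs_le_sqrt (le_add_of_nonneg_left (sq_nonneg (f a)))

lemma isBigO_of_eventually_div_succ_le {f g : ℕ → ℝ} (hf : ∀ k, 0 ≤ f k) (hg : ∀ k, 0 < g k)
    (h : ∀ᶠ k in atTop, f (k + 1) / g (k + 1) ≤ f k / g k) : f =O[atTop] g := by
  obtain ⟨K, hK⟩ := eventually_atTop.1 h
  refine .of_bound (f K / g K) (eventually_atTop.2 ⟨K, fun k hk => ?_⟩)
  have hratio : f k / g k ≤ f K / g K := by
    induction k, hk using Nat.le_induction with
    | base => rfl
    | succ k hk ih => exact (hK k hk).trans ih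
  rwa [Real.norm_of_nonneg (hf k), Real.norm_of_nonneg (hg k).le, ← div_le_iff₀ (hg k)]

lemma isBigO_natCast_of_succ_le_add {a : ℕ → ℝ} {d : ℝ} (ha : ∀ k, 0 ≤ a k)
    (h : ∀ k, a (k + 1) ≤ a k + d) : a =O[atTop] fun k => (k : ℝ) := by
  have hlinear : ∀ k : ℕ, a k ≤ a 0 + d * k := fun k => by
    induction k with
    | zero => simp
    | succ k ih => push_cast; linarith [h k]
  refine .of_bound (a 0 + d) ?_
  filter_upwards [eventually_ge_atTop 1] with k hk
  have hk' : (1 : ℝ) ≤ k := mod_cast hk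
  rw [Real.norm_of_nonneg (ha k), Real.norm_of_nonneg k.cast_nonneg]
  nlinarith [hlinear k, ha 0]

lemma natCast_isBigO_of_add_le_succ {a : ℕ → ℝ} {c : ℝ} (hc : 0 < c) (ha : 0 ≤ a 0)
    (h : ∀ k, a k + c ≤ a (k + 1)) : (fun k : ℕ => (k : ℝ)) =O[atTop] a := by
  have hlinear : ∀ k : ℕ, c * k ≤ a k := fun k => by
    induction k with
    | zero => simpa using ha
    | succ k ih => push_cast; linarith [h k]
  refine .of_bound c⁻¹ (Eventually.of_forall fun k => ?_)
  rw [Real.norm_of_nonneg k.cast_nonneg, le_inv_mul_iff₀ hc]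
  exact (hlinear k).trans (le_abs_self _)

end Asymptotics

section ImplicitRecurrence

variable {p : ℕ} {c : ℝ}

lemma inv_pow_add_le_inv_pow {b v : ℝ} (hv : 0 < v) (hc : 0 ≤ c) (h : v * (1 + c * v ^ p) ≤ b) :
    (b ^ p)⁻¹ + p * c / (1 + p * c * v ^ p) ≤ (v ^ p)⁻¹ := by
  have hpow : v ^ p * (1 + p * c * v ^ p) ≤ b ^ p :=
    calc v ^ p * (1 + p * c * v ^ p) = v ^ p * (1 + p * (c * v ^ p)) := by ring
      _ ≤ v ^ p * (1 + c * v ^ p) ^ p := by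
        gcongr
        exact one_add_mul_le_pow (le_trans (by norm_num) (by positivity : 0 ≤ c * v ^ p)) p
      _ = (v * (1 + c * v ^ p)) ^ p := (mul_pow _ _ _).symm
      _ ≤ b ^ p := by gcongr
  calc (b ^ p)⁻¹ + p * c / (1 + p * c * v ^ p)
      ≤ (v ^ p * (1 + p * c * v ^ p))⁻¹ + p * c / (1 + p * c * v ^ p) := by gcongr
    _ = (v ^ p)⁻¹ := by field_simp

lemma inv_pow_le_inv_pow_add {b v : ℝ} (hv : 0 < v) (hb : 0 < b) (h : b ≤ v * (1 + c * v ^ p)) :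
    (v ^ p)⁻¹ ≤ (b ^ p)⁻¹ + p * c := by
  set s := c * v ^ p with hs
  have hs_pos : 0 < 1 + s := pos_of_mul_pos_right (hb.trans_le h) hv.le
  have hinv : 1 - s ≤ (1 + s)⁻¹ := by
    rw [← one_div, le_div_iff₀ hs_pos]
    nlinarith [sq_nonneg s]
  have hbernoulli : 1 - p * s ≤ ((1 + s)⁻¹) ^ p :=
    calc 1 - p * s ≤ 1 + p * ((1 + s)⁻¹ - 1) := by
          nlinarith [mul_le_mul_of_nonneg_left hinv p.cast_nonneg]
      _ ≤ (1 + ((1 + s)⁻¹ - 1)) ^ p := one_add_mul_le_pow (by linarith [inv_pos.2 hs_pos]) p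
      _ = ((1 + s)⁻¹) ^ p := by rw [add_sub_cancel]
  have hpow : (v ^ p)⁻¹ - p * c ≤ (b ^ p)⁻¹ :=
    calc (v ^ p)⁻¹ - p * c = (v ^ p)⁻¹ * (1 - p * s) := by rw [hs]; field_simp
      _ ≤ (v ^ p)⁻¹ * ((1 + s)⁻¹) ^ p := by gcongr
      _ = ((v * (1 + s)) ^ p)⁻¹ := by rw [mul_pow, mul_inv, inv_pow]
      _ ≤ (b ^ p)⁻¹ := by gcongr
  linarith

lemma antitone_of_succ_mul_one_add_le {t e : ℕ → ℝ} (ht : ∀ k, 0 ≤ t k) (he : ∀ k, 0 ≤ e k)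
    (h : ∀ k, t (k + 1) * (1 + e k) ≤ t k) : Antitone t :=
  antitone_nat_of_succ_le fun k =>
    (le_mul_of_one_le_right (ht (k + 1)) (le_add_of_nonneg_right (he k))).trans (h k)

lemma inv_pow_rpow_neg_one_div {t : ℝ} (ht : 0 ≤ t) (hp : p ≠ 0) :
    ((t ^ p)⁻¹) ^ (-(1 : ℝ) / p) = t := by
  rw [neg_div, one_div, Real.rpow_neg (by positivity), Real.inv_rpow (by positivity), inv_inv,
    Real.pow_rpow_inv_natCast ht hp]

variable {t : ℕ → ℝ}

lemma natCast_isBigO_inv_pow (hp : p ≠ 0) (hc : 0 < c) (ht : ∀ k, 0 < t k)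
    (h : ∀ k, t (k + 1) * (1 + c * t (k + 1) ^ p) ≤ t k) :
    (fun k : ℕ => (k : ℝ)) =O[atTop] fun k => (t k ^ p)⁻¹ := by
  have hanti : Antitone t := antitone_of_succ_mul_one_add_le (fun k => (ht k).le)
    (fun k => mul_nonneg hc.le (pow_pos (ht (k + 1)) p).le) h
  have ht₀ := ht 0
  refine natCast_isBigO_of_add_le_succ (c := p * c / (1 + p * c * t 0 ^ p)) (by positivity)
    (by positivity) fun k => ?_
  have htk := ht (k + 1)
  calc (t k ^ p)⁻¹ + p * c / (1 + p * c * t 0 ^ p)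
      ≤ (t k ^ p)⁻¹ + p * c / (1 + p * c * t (k + 1) ^ p) := by
        gcongr
        exact hanti (Nat.zero_le _)
    _ ≤ (t (k + 1) ^ p)⁻¹ := inv_pow_add_le_inv_pow htk hc.le (h k)

lemma inv_pow_isBigO_natCast (ht : ∀ k, 0 < t k)
    (h : ∀ k, t k ≤ t (k + 1) * (1 + c * t (k + 1) ^ p)) :
    (fun k => (t k ^ p)⁻¹) =O[atTop] fun k => (k : ℝ) :=
  isBigO_natCast_of_succ_le_add (fun k => (inv_pos.2 (pow_pos (ht k) p)).le)
    fun k => inv_pow_le_inv_pow_add (ht (k + 1)) (ht k) (h k)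

lemma isTheta_natCast_rpow_of_succ_mul {d : ℝ} (hp : p ≠ 0) (hc : 0 < c) (ht : ∀ k, 0 < t k)
    (hlower : ∀ k, t (k + 1) * (1 + c * t (k + 1) ^ p) ≤ t k)
    (hupper : ∀ k, t k ≤ t (k + 1) * (1 + d * t (k + 1) ^ p)) :
    t =Θ[atTop] fun k => (k : ℝ) ^ (-(1 : ℝ) / p) := by
  have hlinear : (fun k => (t k ^ p)⁻¹) =Θ[atTop] fun k => (k : ℝ) :=
    ⟨inv_pow_isBigO_natCast ht hupper, natCast_isBigO_inv_pow hp hc ht hlower⟩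
  have hroot := hlinear.rpow (r := -(1 : ℝ) / p)
    (Eventually.of_forall fun k => (inv_pos.2 (pow_pos (ht k) p)).le)
    (Eventually.of_forall fun k => k.cast_nonneg)
  simpa only [inv_pow_rpow_neg_one_div (ht _).le hp] using hroot

lemma tendsto_zero_of_succ_mul_le (hp : p ≠ 0) (hc : 0 < c) (ht : ∀ k, 0 < t k)
    (h : ∀ k, t (k + 1) * (1 + c * t (k + 1) ^ p) ≤ t k) : Tendsto t atTop (𝓝 0) := by
  have hpow : Tendsto (fun k => t k ^ p) atTop (𝓝 0) := by
    have hO := (natCast_isBigO_inv_pow hp hc ht h).inv_rev <|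
      (eventually_ne_atTop 0).mono fun k hk hk₀ => absurd hk₀ (Nat.cast_ne_zero.2 hk)
    simp only [inv_inv] at hO
    exact hO.trans_tendsto tendsto_inv_atTop_nhds_zero_nat
  have hroot := hpow.rpow_const (p := (p : ℝ)⁻¹) (.inr (by positivity))
  simpa only [Real.pow_rpow_inv_natCast (ht _).le hp,
    Real.zero_rpow (inv_ne_zero (Nat.cast_ne_zero.2 hp))] using hroot

end ImplicitRecurrence

/-- Orbits of the proximal point method with unit step for `f² / 2`, where `f = x² + y⁴`, given by
their optimality conditions. These determine step `k` from step `k + 1`, so the equations are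
oriented that way. -/
structure IsProximalOrbit (x y : ℕ → ℝ) : Prop where
  fst_eq : ∀ k, x k = x (k + 1) * (1 + 2 * (x (k + 1) ^ 2 + y (k + 1) ^ 4))
  snd_eq : ∀ k, y k = y (k + 1) * (1 + 4 * y (k + 1) ^ 2 * (x (k + 1) ^ 2 + y (k + 1) ^ 4))

namespace IsProximalOrbit

variable {x y : ℕ → ℝ}

lemma abs (h : IsProximalOrbit x y) : IsProximalOrbit (fun k => |x k|) (fun k => |y k|) where
  fst_eq k := by
    have hfactor : 0 ≤ 1 + 2 * (x (k + 1) ^ 2 + y (k + 1) ^ 4) := by positivity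
    simp only [sq_abs, Even.pow_abs (by decide : Even 4)]
    rw [h.fst_eq k, abs_mul, abs_of_nonneg hfactor]
  snd_eq k := by
    have hfactor : 0 ≤ 1 + 4 * y (k + 1) ^ 2 * (x (k + 1) ^ 2 + y (k + 1) ^ 4) := by positivity
    simp only [sq_abs, Even.pow_abs (by decide : Even 4)]
    rw [h.snd_eq k, abs_mul, abs_of_nonneg hfactor]

lemma snd_ne_zero (h : IsProximalOrbit x y) (hy₀ : y 0 ≠ 0) (k : ℕ) : y k ≠ 0 := by
  induction k with
  | zero => exact hy₀
  | succ k ih => exact left_ne_zero_of_mul (h.snd_eq k ▸ ih)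

lemma antitone_fst (h : IsProximalOrbit x y) (hx : ∀ k, 0 ≤ x k) : Antitone x :=
  antitone_of_succ_mul_one_add_le hx
    (e := fun k => 2 * (x (k + 1) ^ 2 + y (k + 1) ^ 4)) (fun _ => by positivity)
    fun k => (h.fst_eq k).ge

lemma snd_succ_mul_le (h : IsProximalOrbit x y) (hy : ∀ k, 0 < y k) (k : ℕ) :
    y (k + 1) * (1 + 4 * y (k + 1) ^ 6) ≤ y k := by
  have hyk := hy (k + 1)
  calc y (k + 1) * (1 + 4 * y (k + 1) ^ 6)
      = y (k + 1) * (1 + 4 * y (k + 1) ^ 2 * y (k + 1) ^ 4) := by ring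
    _ ≤ y (k + 1) * (1 + 4 * y (k + 1) ^ 2 * (x (k + 1) ^ 2 + y (k + 1) ^ 4)) := by
      gcongr
      exact le_add_of_nonneg_left (sq_nonneg _)
    _ = y k := (h.snd_eq k).symm

lemma tendsto_snd (h : IsProximalOrbit x y) (hy : ∀ k, 0 < y k) : Tendsto y atTop (𝓝 0) :=
  tendsto_zero_of_succ_mul_le (by norm_num) four_pos hy (h.snd_succ_mul_le hy)

lemma eventually_snd_factor_sq_le (h : IsProximalOrbit x y) (hx : ∀ k, 0 ≤ x k)
    (hy : ∀ k, 0 < y k) :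
    ∀ᶠ k in atTop, (1 + 4 * y k ^ 2 * (x k ^ 2 + y k ^ 4)) ^ 2 ≤
      1 + 2 * (x k ^ 2 + y k ^ 4) := by
  have hsmall :
      Tendsto (fun k => 8 * y k ^ 2 + 16 * y k ^ 4 * (x 0 ^ 2 + y k ^ 4)) atTop (𝓝 0) := by
    have hcont : Continuous fun s : ℝ => 8 * s ^ 2 + 16 * s ^ 4 * (x 0 ^ 2 + s ^ 4) := by fun_prop
    exact (hcont.tendsto' 0 0 (by norm_num)).comp (h.tendsto_snd hy)
  filter_upwards [hsmall.eventually_le_const two_pos] with k hk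
  have hx₀ : x k ^ 2 ≤ x 0 ^ 2 :=
    pow_le_pow_left₀ (hx k) (h.antitone_fst hx (Nat.zero_le k)) 2
  set f := x k ^ 2 + y k ^ 4 with hf
  have : 0 ≤ f := by positivity
  calc (1 + 4 * y k ^ 2 * f) ^ 2
      = 1 + (8 * y k ^ 2 + 16 * y k ^ 4 * f) * f := by ring
    _ ≤ 1 + (8 * y k ^ 2 + 16 * y k ^ 4 * (x 0 ^ 2 + y k ^ 4)) * f := by rw [hf]; gcongr
    _ ≤ 1 + 2 * f := by gcongr

lemma fst_isBigO_snd_sq (h : IsProximalOrbit x y) (hx : ∀ k, 0 ≤ x k) (hy : ∀ k, 0 < y k) :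
    x =O[atTop] fun k => y k ^ 2 := by
  refine isBigO_of_eventually_div_succ_le hx (fun k => pow_pos (hy k) 2) ?_
  filter_upwards [(tendsto_add_atTop_nat 1).eventually (h.eventually_snd_factor_sq_le hx hy)]
    with k hk
  have hxk := hx (k + 1)
  have hyk := hy (k + 1)
  rw [div_le_div_iff₀ (pow_pos hyk 2) (pow_pos (hy k) 2)]
  calc x (k + 1) * y k ^ 2
      = x (k + 1) * y (k + 1) ^ 2 *
          (1 + 4 * y (k + 1) ^ 2 * (x (k + 1) ^ 2 + y (k + 1) ^ 4)) ^ 2 := by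
        rw [h.snd_eq k]; ring
    _ ≤ x (k + 1) * y (k + 1) ^ 2 * (1 + 2 * (x (k + 1) ^ 2 + y (k + 1) ^ 4)) := by gcongr
    _ = x k * y (k + 1) ^ 2 := by rw [h.fst_eq k]; ring

lemma exists_snd_le_succ_mul (h : IsProximalOrbit x y) (hx : ∀ k, 0 ≤ x k) (hy : ∀ k, 0 < y k) :
    ∃ d, ∀ k, y k ≤ y (k + 1) * (1 + d * y (k + 1) ^ 6) := by
  obtain ⟨M, -, hM⟩ := bound_of_isBigO_nat_atTop (h.fst_isBigO_snd_sq hx hy)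
  refine ⟨4 * (M ^ 2 + 1), fun k => ?_⟩
  have hyk := hy (k + 1)
  have hxy : x (k + 1) ≤ M * y (k + 1) ^ 2 := by
    simpa [abs_of_nonneg (hx (k + 1))] using hM (x := k + 1) (pow_pos hyk 2).ne'
  calc y k = y (k + 1) * (1 + 4 * y (k + 1) ^ 2 * (x (k + 1) ^ 2 + y (k + 1) ^ 4)) := h.snd_eq k
    _ ≤ y (k + 1) * (1 + 4 * y (k + 1) ^ 2 * ((M * y (k + 1) ^ 2) ^ 2 + y (k + 1) ^ 4)) := by
      gcongr
      exact hx (k + 1)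
    _ = y (k + 1) * (1 + 4 * (M ^ 2 + 1) * y (k + 1) ^ 6) := by ring

lemma snd_isTheta (h : IsProximalOrbit x y) (hx : ∀ k, 0 ≤ x k) (hy : ∀ k, 0 < y k) :
    y =Θ[atTop] fun k => (k : ℝ) ^ (-(1 : ℝ) / 6) := by
  obtain ⟨d, hd⟩ := h.exists_snd_le_succ_mul hx hy
  exact_mod_cast isTheta_natCast_rpow_of_succ_mul (by norm_num) four_pos hy
    (h.snd_succ_mul_le hy) hd

lemma fst_isBigO_snd (h : IsProximalOrbit x y) (hx : ∀ k, 0 ≤ x k) (hy : ∀ k, 0 < y k) :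
    x =O[atTop] y := by
  refine (h.fst_isBigO_snd_sq hx hy).trans ?_
  simpa [sq] using ((h.tendsto_snd hy).isBigO_one ℝ).mul (isBigO_refl y atTop)

theorem isTheta_sqrt_fst_sq_add_snd_sq (h : IsProximalOrbit x y) (hy₀ : y 0 ≠ 0) :
    (fun k => √(x k ^ 2 + y k ^ 2)) =Θ[atTop] fun k => (k : ℝ) ^ (-(1 : ℝ) / 6) := by
  have hx : ∀ k, 0 ≤ |x k| := fun k => abs_nonneg _
  have hy : ∀ k, 0 < |y k| := fun k => abs_pos.2 (h.snd_ne_zero hy₀ k)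
  have hnorm := isTheta_sqrt_sq_add_sq (h.abs.fst_isBigO_snd hx hy)
  simp only [sq_abs] at hnorm
  exact hnorm.trans (h.abs.snd_isTheta hx hy)

end IsProximalOrbit

section Projection

lemma eq_add_mul_deriv_of_isLocalMin {g : ℝ → ℝ} {a r u g' : ℝ} (hg : HasDerivAt g g' u)
    (hmin : IsLocalMin (fun s => (s - a) ^ 2 + r + g s ^ 2) u) : a = u + g u * g' := by
  have hderiv : HasDerivAt (fun s => (s - a) ^ 2 + r + g s ^ 2)
      (2 * (u - a) + 2 * g u * g') u := by
    have hsum := ((((hasDerivAt_id' u).sub_const a).pow 2).add_const r).add (hg.pow 2)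
    exact hsum.congr_deriv (by simp)
  linarith [hmin.hasDerivAt_eq_zero hderiv]

namespace IsMetricProj

lemma sq_add_sq_add_sq_le {S : Set (EuclideanSpace ℝ (Fin 3))} {p u s : EuclideanSpace ℝ (Fin 3)}
    (h : IsMetricProj S p u) (hs : s ∈ S) :
    (u 0 - p 0) ^ 2 + (u 1 - p 1) ^ 2 + (u 2 - p 2) ^ 2 ≤
      (s 0 - p 0) ^ 2 + (s 1 - p 1) ^ 2 + (s 2 - p 2) ^ 2 := by
  simpa [EuclideanSpace.norm_sq_eq, Fin.sum_univ_three] using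
    pow_le_pow_left₀ (norm_nonneg _) (h.2 s hs) 2

lemma coord_eq_of_plane {w u : EuclideanSpace ℝ (Fin 3)}
    (h : IsMetricProj {p : EuclideanSpace ℝ (Fin 3) | p 2 = 0} w u) : u 0 = w 0 ∧ u 1 = w 1 := by
  have hu : u 2 = 0 := h.1
  have hle : (u 0 - w 0) ^ 2 + (u 1 - w 1) ^ 2 ≤ 0 := by
    simpa [e3, hu] using h.sq_add_sq_add_sq_le (s := e3 (w 0) (w 1) 0) (by simp [e3])
  constructor <;> nlinarith [sq_nonneg (u 0 - w 0), sq_nonneg (u 1 - w 1)]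

variable {f : ℝ → ℝ → ℝ} {a b : ℝ} {w : EuclideanSpace ℝ (Fin 3)}

lemma sq_add_sq_add_sq_le_of_epigraph (hf : ∀ s t, 0 ≤ f s t)
    (h : IsMetricProj {p | f (p 0) (p 1) ≤ p 2} (e3 a b 0) w) (s t : ℝ) :
    (w 0 - a) ^ 2 + (w 1 - b) ^ 2 + f (w 0) (w 1) ^ 2 ≤
      (s - a) ^ 2 + (t - b) ^ 2 + f s t ^ 2 := by
  have hw : f (w 0) (w 1) ^ 2 ≤ w 2 ^ 2 := pow_le_pow_left₀ (hf _ _) h.1 2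
  have hle : (w 0 - a) ^ 2 + (w 1 - b) ^ 2 + w 2 ^ 2 ≤
      (s - a) ^ 2 + (t - b) ^ 2 + f s t ^ 2 := by
    simpa [e3] using h.sq_add_sq_add_sq_le (s := e3 s t (f s t)) (by simp [e3])
  linarith

lemma epigraph_fst_eq (hf : ∀ s t, 0 ≤ f s t)
    (h : IsMetricProj {p | f (p 0) (p 1) ≤ p 2} (e3 a b 0) w) {f' : ℝ}
    (hf' : HasDerivAt (fun s => f s (w 1)) f' (w 0)) : a = w 0 + f (w 0) (w 1) * f' :=
  eq_add_mul_deriv_of_isLocalMin hf' (r := (w 1 - b) ^ 2) <|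
    Eventually.of_forall fun s => h.sq_add_sq_add_sq_le_of_epigraph hf s (w 1)

lemma epigraph_snd_eq (hf : ∀ s t, 0 ≤ f s t)
    (h : IsMetricProj {p | f (p 0) (p 1) ≤ p 2} (e3 a b 0) w) {f' : ℝ}
    (hf' : HasDerivAt (fun t => f (w 0) t) f' (w 1)) : b = w 1 + f (w 0) (w 1) * f' :=
  eq_add_mul_deriv_of_isLocalMin hf' (r := (w 0 - a) ^ 2) <| Eventually.of_forall fun t => by
    simpa only [add_comm ((_ - b) ^ 2)] using h.sq_add_sq_add_sq_le_of_epigraph hf (w 0) t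

end IsMetricProj

lemma isProximalOrbit_of_isMetricProj {x y : ℕ → ℝ}
    (hstep : ∀ k, ∃ w,
      IsMetricProj {p : EuclideanSpace ℝ (Fin 3) | p 0 ^ 2 + p 1 ^ 4 ≤ p 2} (e3 (x k) (y k) 0) w ∧
      IsMetricProj {p | p 2 = 0} w (e3 (x (k + 1)) (y (k + 1)) 0)) :
    IsProximalOrbit x y := by
  have hf : ∀ s t : ℝ, 0 ≤ s ^ 2 + t ^ 4 := fun s t => by positivity
  have heqs : ∀ k, x k = x (k + 1) * (1 + 2 * (x (k + 1) ^ 2 + y (k + 1) ^ 4)) ∧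
      y k = y (k + 1) * (1 + 4 * y (k + 1) ^ 2 * (x (k + 1) ^ 2 + y (k + 1) ^ 4)) := fun k => by
    obtain ⟨w, hA, hB⟩ := hstep k
    obtain ⟨hx, hy⟩ : x (k + 1) = w 0 ∧ y (k + 1) = w 1 := by simpa [e3] using hB.coord_eq_of_plane
    have hfst : HasDerivAt (fun s : ℝ => s ^ 2 + w 1 ^ 4) (2 * w 0) (w 0) := by
      simpa using (hasDerivAt_pow 2 (w 0)).add_const (w 1 ^ 4)
    have hsnd : HasDerivAt (fun t : ℝ => w 0 ^ 2 + t ^ 4) (4 * w 1 ^ 3) (w 1) := by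
      simpa using (hasDerivAt_pow 4 (w 1)).const_add (w 0 ^ 2)
    rw [hx, hy, hA.epigraph_fst_eq (f := fun s t => s ^ 2 + t ^ 4) hf hfst,
      hA.epigraph_snd_eq (f := fun s t => s ^ 2 + t ^ 4) hf hsnd]
    constructor <;> ring
  exact ⟨fun k => (heqs k).1, fun k => (heqs k).2⟩

end Projection

theorem stmt16 (A B : Set (EuclideanSpace ℝ (Fin 3)))
    (hA : A = {p | p 0 ^ 2 + p 1 ^ 4 ≤ p 2})
    (hB : B = {p : EuclideanSpace ℝ (Fin 3) | p 2 = 0})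
    (x y : ℕ → ℝ)
    (hstep : ∀ k, ∃ w, IsMetricProj A (e3 (x k) (y k) 0) w ∧
      IsMetricProj B w (e3 (x (k + 1)) (y (k + 1)) 0))
    (hy0 : y 0 ≠ 0) :
    ∃ C₁ C₂ : ℝ, ∃ K : ℕ, 0 < C₁ ∧ C₁ ≤ C₂ ∧ ∀ k ≥ K,
      C₁ * (k : ℝ) ^ (-(1 : ℝ) / 6) ≤ Real.sqrt (x k ^ 2 + y k ^ 2) ∧
      Real.sqrt (x k ^ 2 + y k ^ 2) ≤ C₂ * (k : ℝ) ^ (-(1 : ℝ) / 6) := by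
  subst hA hB
  have hrate := (isProximalOrbit_of_isMetricProj hstep).isTheta_sqrt_fst_sq_add_snd_sq hy0
  simpa only [Real.norm_of_nonneg (Real.sqrt_nonneg _),
    Real.norm_of_nonneg (Real.rpow_nonneg (Nat.cast_nonneg _) _)] using
    exists_bounds_of_isTheta hrate
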